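/- Let μ* := √3·(π/2 − arcsin(√(3/7))) and let μ > 0. Then a ground state of F_{6,4} at mass μ exists if and only if μ = μ*; i.e., there exists u ∈ H¹(ℝ) with ‖u‖₂² = μ and F_{6,4}(u) ≤ F_{6,4}(v) for every v ∈ H¹(ℝ) with ‖v‖₂² = μ, exactly when μ = μ*. -/

import Mathlib

open MeasureTheory Real Set

noncomputable section

/-- `u ∈ H¹(ℝ)` with weak derivative `u'`: `u` is continuous, square-integrable,
`u'` is square-integrable, and `u(b) − u(a) = ∫_a^b u'(t) dt` for all `a ≤ b`. -/
def IsH1 (u u' : ℝ → ℝ) : Prop :=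
  Continuous u ∧ Integrable (fun x => (u x) ^ 2) ∧ Integrable (fun x => (u' x) ^ 2) ∧
    ∀ a b : ℝ, a ≤ b → u b - u a = ∫ t in a..b, u' t

/-- The mass `‖u‖₂² = ∫_ℝ u(x)² dx`. -/
def mass (u : ℝ → ℝ) : ℝ := ∫ x, (u x) ^ 2

/-- `D_q(u) = (1/2)∫ u'² − (1/q)|u(0)|^q`. -/
def Dfun (q : ℝ) (u u' : ℝ → ℝ) : ℝ :=
  (1 / 2) * (∫ x, (u' x) ^ 2) - (1 / q) * |u 0| ^ q

/-- `F_{p,q}(u) = (1/2)∫ u'² − (1/p)∫ |u|^p − (1/q)|u(0)|^q`. -/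
def Ffun (p q : ℝ) (u u' : ℝ → ℝ) : ℝ :=
  (1 / 2) * (∫ x, (u' x) ^ 2) - (1 / p) * (∫ x, |u x| ^ p) - (1 / q) * |u 0| ^ q

/-!
The lower bound at `μ*` is a calibration. On a half-line `[a, ∞)`, adding the total derivative
`(u⁴ k)'` to the density `(1/2) u'² - (1/6) u⁶` gives the square `(1/2) (u' + 4 u³ k)²` as soon
as `k` solves the Riccati equation `k' = (8 k² + 1/6) u²`. The solutions are
`k = tan θ / (4 √3)`, where `θ` is a constant plus the accumulated mass times `2 / √3`. Using
this on both sides of the origin, with `θ` centred at the same phase `φ`, the midpoint convexity of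
`tan` yields
`u(0)⁴ tan φ / (2 √3) ≤ (1/2) ∫ u'² - (1/6) ∫ u⁶` whenever `0 ≤ φ` and `φ + μ / √3 < π / 2`. At
`μ*` the phase may approach `arctan (√3 / 2)`, where the left side is `u(0)⁴ / 4`, so the energy
is nonnegative; gluing two soliton tails at the origin attains the value zero.

Conversely, `F_{6,4}` is multiplied by `λ²` under the mass-preserving dilation `√λ u(λ ·)`, so
every ground state has energy zero, while `a u` with `1 < a` has energy less than `a²` times that
of `u`. Two ground states of different masses would therefore contradict each other.
-/

open Filter Topology

/-- `f` is locally absolutely continuous with derivative `f'`, encoded by the fundamental theorem of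
calculus. Unlike `IsH1`, it demands that `f'` be integrable on bounded intervals, so its integrals
are never junk values. -/
structure HasWeakDeriv (f f' : ℝ → ℝ) : Prop where
  intervalIntegrable : ∀ a b, IntervalIntegrable f' volume a b
  sub_eq_integral : ∀ a b, f b - f a = ∫ t in a..b, f' t

namespace HasWeakDeriv

variable {f f' g g' : ℝ → ℝ}

lemma of_hasDerivAt (hf : ∀ x, HasDerivAt f (f' x) x) (hf' : Continuous f') :
    HasWeakDeriv f f' where
  intervalIntegrable := hf'.intervalIntegrable
  sub_eq_integral a b := (intervalIntegral.integral_eq_sub_of_hasDerivAt (fun x _ ↦ hf x)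
    (hf'.intervalIntegrable a b)).symm

lemma eq_add_integral (hf : HasWeakDeriv f f') (a : ℝ) : f = fun x ↦ f a + ∫ t in a..x, f' t := by
  funext x
  rw [← hf.sub_eq_integral, add_sub_cancel]

lemma locallyIntegrable (hf : HasWeakDeriv f f') : LocallyIntegrable f' := fun x ↦
  ⟨Ioc (x - 1) (x + 1), Ioc_mem_nhds (by linarith) (by linarith),
    (intervalIntegrable_iff_integrableOn_Ioc_of_le (by linarith)).1 (hf.intervalIntegrable _ _)⟩

lemma ae_hasDerivAt (hf : HasWeakDeriv f f') : ∀ᵐ x, HasDerivAt f (f' x) x := by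
  filter_upwards [LocallyIntegrable.ae_hasDerivAt_integral hf.locallyIntegrable] with x hx
  rw [hf.eq_add_integral 0]
  exact (hx 0).const_add (f 0)

lemma absolutelyContinuousOnInterval (hf : HasWeakDeriv f f') (a b : ℝ) :
    AbsolutelyContinuousOnInterval f a b := by
  rw [hf.eq_add_integral a]
  exact contDiffOn_const.absolutelyContinuousOnInterval.fun_add
    ((hf.intervalIntegrable a b).absolutelyContinuousOnInterval_intervalIntegral left_mem_uIcc)

lemma continuous (hf : HasWeakDeriv f f') : Continuous f := by
  rw [hf.eq_add_integral 0]
  exact continuous_const.add (intervalIntegral.continuous_primitive hf.intervalIntegrable 0)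

lemma mul (hf : HasWeakDeriv f f') (hg : HasWeakDeriv g g') :
    HasWeakDeriv (fun x ↦ f x * g x) (fun x ↦ f' x * g x + f x * g' x) where
  intervalIntegrable a b :=
    ((hf.intervalIntegrable a b).mul_continuousOn hg.continuous.continuousOn).add
      ((hg.intervalIntegrable a b).continuousOn_mul hf.continuous.continuousOn)
  sub_eq_integral a b := by
    have hfg := (hf.absolutelyContinuousOnInterval a b).mul (hg.absolutelyContinuousOnInterval a b)
    refine hfg.integral_deriv_eq_sub.symm.trans (intervalIntegral.integral_congr_ae ?_)
    filter_upwards [hf.ae_hasDerivAt, hg.ae_hasDerivAt] with x hfx hgx _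
    exact (hfx.mul hgx).deriv

lemma comp_neg (hf : HasWeakDeriv f f') : HasWeakDeriv (fun x ↦ f (-x)) (fun x ↦ -f' (-x)) where
  intervalIntegrable a b := by
    have hneg : IntervalIntegrable (fun x ↦ f' (-x)) volume a b := by
      simpa using (hf.intervalIntegrable (-a) (-b)).comp_mul_left (c := -1)
    exact hneg.neg
  sub_eq_integral a b := by
    rw [intervalIntegral.integral_neg, intervalIntegral.integral_comp_neg,
      ← hf.sub_eq_integral, neg_sub]

lemma abs_le_of_integrable (hf : HasWeakDeriv f f') (hf' : Integrable f') (x : ℝ) :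
    |f x| ≤ |f 0| + ∫ t, |f' t| := by
  have hprim : |∫ t in (0 : ℝ)..x, f' t| ≤ ∫ t, |f' t| :=
    (intervalIntegral.norm_integral_le_integral_norm_uIoc (f := f')).trans
      (setIntegral_le_integral hf'.norm (ae_of_all _ fun _ ↦ norm_nonneg _))
  rw [congrFun (hf.eq_add_integral 0) x]
  exact (abs_add_le _ _).trans (by gcongr)

lemma tendsto_zero_atTop (hf : HasWeakDeriv f f') (hfi : Integrable f) (hf' : Integrable f') :
    Tendsto f atTop (𝓝 0) := by
  have hlim : Tendsto f atTop (𝓝 (f 0 + ∫ t in Ioi 0, f' t)) := by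
    rw [hf.eq_add_integral 0]
    simpa using
      (intervalIntegral_tendsto_integral_Ioi 0 hf'.integrableOn tendsto_id).const_add (f 0)
  have htop : ∀ s ∈ (atTop : Filter ℝ), volume s = ⊤ := fun s hs ↦ by
    obtain ⟨b, hb⟩ := mem_atTop_sets.1 hs
    exact measure_mono_top (fun x hx ↦ hb x hx) (volume_Ici (a := b))
  rwa [IntegrableAtFilter.eq_zero_of_tendsto (hfi.integrableAtFilter atTop) htop hlim] at hlim

end HasWeakDeriv

section Sobolev

variable {u u' : ℝ → ℝ}

/- Where `u'` is not interval integrable, its integral is the junk value `0`, so `u` is constant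
from `b` on. -/
lemma IsH1.eq_zero_of_not_intervalIntegrable (hu : IsH1 u u') {a b : ℝ} (hab : a ≤ b)
    (hu' : ¬IntervalIntegrable u' volume a b) : u a = 0 ∧ u b = 0 := by
  obtain ⟨-, hu2, -, hftc⟩ := hu
  have hconst : ∀ y, b ≤ y → u y = u a := fun y hby ↦ by
    have hy : ¬IntervalIntegrable u' volume a y := fun hi ↦
      hu' (hi.mono_set (uIcc_subset_uIcc_left ⟨by simp [hab], by simp [hby]⟩))
    have := hftc a y (hab.trans hby)
    rwa [intervalIntegral.integral_undef hy, sub_eq_zero] at this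
  have hint : IntegrableOn (fun _ ↦ u a ^ 2) (Ioi b) :=
    hu2.integrableOn.congr_fun (fun y hy ↦ by simp only [hconst y (le_of_lt hy)]) measurableSet_Ioi
  have hua : u a = 0 := by simpa [integrableOn_const_iff] using hint
  exact ⟨hua, (hconst b le_rfl).trans hua⟩

lemma IsH1.hasWeakDeriv (hu : IsH1 u u') (hm : mass u ≠ 0) : HasWeakDeriv u u' := by
  have hle : ∀ a b, a ≤ b → IntervalIntegrable u' volume a b := by
    intro a b hab
    contrapose! hm
    suffices u = 0 by simp [mass, this]
    funext x
    have hleft : min a x ≤ x := min_le_right _ _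
    have hright : x ≤ max b x := le_max_right _ _
    have hsub : uIcc a b ⊆ uIcc (min a x) (max b x) := by
      rw [uIcc_of_le hab, uIcc_of_le (hleft.trans hright)]
      exact Icc_subset_Icc (min_le_left _ _) (le_max_left _ _)
    by_cases hx : IntervalIntegrable u' volume (min a x) x
    · exact (hu.eq_zero_of_not_intervalIntegrable hright
        fun hi ↦ hm ((hx.trans hi).mono_set hsub)).1
    · exact (hu.eq_zero_of_not_intervalIntegrable hleft hx).2
  refine ⟨fun a b ↦ (le_total a b).elim (hle a b) fun h ↦ (hle b a h).symm, fun a b ↦ ?_⟩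
  rcases le_total a b with h | h
  · exact hu.2.2.2 a b h
  · rw [intervalIntegral.integral_symm, ← hu.2.2.2 b a h, neg_sub]

lemma HasWeakDeriv.integrable_deriv_mul_self (hd : HasWeakDeriv u u')
    (hu : Integrable fun x ↦ u x ^ 2) (hu' : Integrable fun x ↦ u' x ^ 2) :
    Integrable fun x ↦ u' x * u x + u x * u' x := by
  have hL2 := (memLp_two_iff_integrable_sq hd.continuous.aestronglyMeasurable).2 hu
  have hL2' := (memLp_two_iff_integrable_sq hd.locallyIntegrable.aestronglyMeasurable).2 hu'
  exact (hL2'.integrable_mul hL2).add (hL2.integrable_mul hL2')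

lemma HasWeakDeriv.tendsto_mul_self_atTop (hd : HasWeakDeriv u u')
    (hu : Integrable fun x ↦ u x ^ 2) (hu' : Integrable fun x ↦ u' x ^ 2) :
    Tendsto (fun x ↦ u x * u x) atTop (𝓝 0) :=
  (hd.mul hd).tendsto_zero_atTop (by simpa only [sq] using hu)
    (hd.integrable_deriv_mul_self hu hu')

lemma HasWeakDeriv.exists_abs_le (hd : HasWeakDeriv u u')
    (hu : Integrable fun x ↦ u x ^ 2) (hu' : Integrable fun x ↦ u' x ^ 2) :
    ∃ C, ∀ x, |u x| ≤ C := by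
  refine ⟨√(|u 0 * u 0| + ∫ t, |u' t * u t + u t * u' t|), fun x ↦ Real.le_sqrt_of_sq_le ?_⟩
  rw [sq, ← abs_mul]
  exact (hd.mul hd).abs_le_of_integrable (hd.integrable_deriv_mul_self hu hu') x

lemma HasWeakDeriv.integrable_abs_rpow (hd : HasWeakDeriv u u') (hu : Integrable fun x ↦ u x ^ 2)
    (hu' : Integrable fun x ↦ u' x ^ 2) {p : ℝ} (hp : 2 ≤ p) : Integrable fun x ↦ |u x| ^ p := by
  obtain ⟨C, hC⟩ := hd.exists_abs_le hu hu'
  have hp0 : 0 ≤ p - 2 := by linarith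
  have hcont : Continuous fun x ↦ |u x| ^ (p - 2) :=
    hd.continuous.abs.rpow_const fun _ ↦ .inr hp0
  refine (hu.bdd_mul (c := C ^ (p - 2)) hcont.aestronglyMeasurable (ae_of_all _ fun x ↦ ?_)).congr
    (ae_of_all _ fun x ↦ ?_)
  · rw [Real.norm_of_nonneg (by positivity)]
    exact Real.rpow_le_rpow (abs_nonneg _) (hC x) hp0
  · dsimp only
    rw [← sq_abs, ← Real.rpow_natCast, ← Real.rpow_add_of_nonneg (abs_nonneg _) hp0 (by simp)]
    congr 1
    push_cast
    ring

end Sobolev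

section Calibration

/-- The density of the free critical energy `(1/2)∫ u'² - (1/6)∫ u⁶`, that is, of `Ffun 6 q` without
its point interaction. -/
def quinticDensity (u u' : ℝ → ℝ) (x : ℝ) : ℝ := 1 / 2 * u' x ^ 2 - 1 / 6 * u x ^ 6

variable {u u' : ℝ → ℝ}

lemma abs_rpow_ofNat_of_even (x : ℝ) {n : ℕ} [n.AtLeastTwo] (hn : Even n) :
    |x| ^ (OfNat.ofNat n : ℝ) = x ^ n :=
  (Real.rpow_ofNat _ n).trans (hn.pow_abs x)

lemma HasWeakDeriv.integrable_pow_six (hd : HasWeakDeriv u u') (hu : Integrable fun x ↦ u x ^ 2)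
    (hu' : Integrable fun x ↦ u' x ^ 2) : Integrable fun x ↦ u x ^ 6 := by
  refine (hd.integrable_abs_rpow hu hu' (p := 6) (by norm_num)).congr (ae_of_all _ fun x ↦ ?_)
  exact abs_rpow_ofNat_of_even (u x) (by decide)

lemma HasWeakDeriv.integrable_quinticDensity (hd : HasWeakDeriv u u')
    (hu : Integrable fun x ↦ u x ^ 2) (hu' : Integrable fun x ↦ u' x ^ 2) :
    Integrable (quinticDensity u u') :=
  (hu'.const_mul _).sub ((hd.integrable_pow_six hu hu').const_mul _)

lemma IsH1.Ffun_six_four_eq (hu : IsH1 u u') (hm : mass u ≠ 0) :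
    Ffun 6 4 u u' = (∫ x, quinticDensity u u' x) - 1 / 4 * u 0 ^ 4 := by
  have hu6 := (hu.hasWeakDeriv hm).integrable_pow_six hu.2.1 hu.2.2.1
  simp only [Ffun, quinticDensity, abs_rpow_ofNat_of_even _ (show Even 6 by decide),
    abs_rpow_ofNat_of_even _ (show Even 4 by decide)]
  rw [integral_sub (hu.2.2.1.const_mul _) (hu6.const_mul _), integral_const_mul, integral_const_mul]

lemma HasWeakDeriv.pow_four_mul_le_integral_quinticDensity (hd : HasWeakDeriv u u')
    (hu : Integrable fun x ↦ u x ^ 2) (hu' : Integrable fun x ↦ u' x ^ 2) {k : ℝ → ℝ} {l : ℝ}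
    (hk : ∀ x, HasDerivAt k ((8 * k x ^ 2 + 1 / 6) * u x ^ 2) x) (hl : Tendsto k atTop (𝓝 l))
    (a : ℝ) : u a ^ 4 * k a ≤ ∫ x in Ioi a, quinticDensity u u' x := by
  have hucont := hd.continuous
  have hkcont : Continuous k := continuous_iff_continuousAt.2 fun x ↦ (hk x).continuousAt
  have hint := hd.integrable_quinticDensity hu hu'
  have hprod := ((hd.mul hd).mul (hd.mul hd)).mul (.of_hasDerivAt hk (by fun_prop))
  have hutop := hd.tendsto_mul_self_atTop hu hu'
  have hlim : Tendsto (fun R ↦ (∫ x in a..R, quinticDensity u u' x) + u R * u R * (u R * u R) * k R)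
      atTop (𝓝 (∫ x in Ioi a, quinticDensity u u' x)) := by
    simpa using (intervalIntegral_tendsto_integral_Ioi a hint.integrableOn tendsto_id).add
      ((hutop.mul hutop).mul hl)
  refine ge_of_tendsto hlim ?_
  filter_upwards [eventually_ge_atTop a] with R hR
  have hsq : ∫ x in a..R, 1 / 2 * (u' x + 4 * u x ^ 3 * k x) ^ 2 =
      (∫ x in a..R, quinticDensity u u' x) +
        (u R * u R * (u R * u R) * k R - u a * u a * (u a * u a) * k a) := by
    rw [hprod.sub_eq_integral a R, ← intervalIntegral.integral_add hint.intervalIntegrable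
      (hprod.intervalIntegrable a R)]
    refine intervalIntegral.integral_congr fun x _ ↦ ?_
    simp only [quinticDensity]
    ring
  have hnonneg : 0 ≤ ∫ x in a..R, 1 / 2 * (u' x + 4 * u x ^ 3 * k x) ^ 2 :=
    intervalIntegral.integral_nonneg hR fun x _ ↦ by positivity
  linarith

/-- The phase of `u` at `y`: the imbalance between the mass to the left and to the right of `y`,
normalised so that `tan (φ + phase u y) / (4 √3)` solves the Riccati equation of the calibration. -/
def phase (u : ℝ → ℝ) (y : ℝ) : ℝ := ((∫ x in Iic y, u x ^ 2) - ∫ x in Ioi y, u x ^ 2) / √3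

lemma setIntegral_Iic_sq_add_setIntegral_Ioi_sq (hu : Integrable fun x ↦ u x ^ 2) (y : ℝ) :
    (∫ x in Iic y, u x ^ 2) + ∫ x in Ioi y, u x ^ 2 = mass u :=
  intervalIntegral.integral_Iic_add_Ioi hu.integrableOn hu.integrableOn

lemma abs_phase_le (hu : Integrable fun x ↦ u x ^ 2) (y : ℝ) : |phase u y| ≤ mass u / √3 := by
  have hleft : 0 ≤ ∫ x in Iic y, u x ^ 2 := integral_nonneg fun x ↦ sq_nonneg _
  have hright : 0 ≤ ∫ x in Ioi y, u x ^ 2 := integral_nonneg fun x ↦ sq_nonneg _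
  rw [phase, abs_div, abs_of_nonneg (Real.sqrt_nonneg 3),
    ← setIntegral_Iic_sq_add_setIntegral_Ioi_sq hu y]
  gcongr
  exact abs_le.2 ⟨by linarith, by linarith⟩

lemma phase_comp_neg_zero (u : ℝ → ℝ) : phase (fun x ↦ u (-x)) 0 = -phase u 0 := by
  have hleft := integral_comp_neg_Iic 0 fun x ↦ u x ^ 2
  have hright := integral_comp_neg_Ioi 0 fun x ↦ u x ^ 2
  rw [neg_zero] at hleft hright
  rw [phase, phase, hleft, hright]
  ring

lemma phase_eq (hu : Integrable fun x ↦ u x ^ 2) (y : ℝ) :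
    phase u y = phase u 0 + 2 / √3 * ∫ x in (0 : ℝ)..y, u x ^ 2 := by
  have hleft := intervalIntegral.integral_Iic_sub_Iic (a := 0) (b := y) hu.integrableOn
    hu.integrableOn
  have hright := intervalIntegral.integral_Ioi_sub_Ioi' (a := 0) (b := y) hu.integrableOn
    hu.integrableOn
  rw [phase, phase]
  linear_combination (1 / √3) * hleft + (1 / √3) * hright

lemma hasDerivAt_phase (hu : Integrable fun x ↦ u x ^ 2) (hcont : Continuous u) (y : ℝ) :
    HasDerivAt (phase u) (2 / √3 * u y ^ 2) y := by
  rw [funext (phase_eq hu)]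
  exact (((hcont.pow 2).integral_hasStrictDerivAt 0 y).hasDerivAt.const_mul _).const_add _

lemma tendsto_phase_atTop (hu : Integrable fun x ↦ u x ^ 2) :
    Tendsto (phase u) atTop (𝓝 (mass u / √3)) := by
  have hmass : mass u / √3 = phase u 0 + 2 / √3 * ∫ x in Ioi 0, u x ^ 2 := by
    rw [phase, ← setIntegral_Iic_sq_add_setIntegral_Ioi_sq hu 0]
    ring
  rw [hmass]
  exact (((intervalIntegral_tendsto_integral_Ioi 0 hu.integrableOn tendsto_id).const_mul
    _).const_add _).congr fun y ↦ (phase_eq hu y).symm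

lemma hasDerivAt_tan_div_four_mul_sqrt_three {θ : ℝ → ℝ} {s y : ℝ}
    (hθ : HasDerivAt θ (2 / √3 * s) y) (hy : θ y ∈ Ioo (-(π / 2)) (π / 2)) :
    HasDerivAt (fun y ↦ tan (θ y) / (4 * √3)) ((8 * (tan (θ y) / (4 * √3)) ^ 2 + 1 / 6) * s) y := by
  have hcos := (cos_pos_of_mem_Ioo hy).ne'
  refine (((hasDerivAt_tan hcos).comp y hθ).div_const _).congr_deriv ?_
  have hsec : 1 / Real.cos (θ y) ^ 2 = 1 + tan (θ y) ^ 2 := by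
    rw [one_div, ← inv_one_add_tan_sq hcos, inv_inv]
  have hsqrt : √3 ^ 2 = (3 : ℝ) := Real.sq_sqrt (by norm_num)
  rw [hsec, div_pow, mul_pow, hsqrt]
  field_simp
  rw [hsqrt]
  ring

lemma HasWeakDeriv.pow_four_mul_tan_le (hd : HasWeakDeriv u u')
    (hu : Integrable fun x ↦ u x ^ 2) (hu' : Integrable fun x ↦ u' x ^ 2) {φ : ℝ}
    (hφ : |φ| + mass u / √3 < π / 2) (a : ℝ) :
    u a ^ 4 * (tan (φ + phase u a) / (4 * √3)) ≤ ∫ x in Ioi a, quinticDensity u u' x := by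
  have hmem : ∀ t, |t| ≤ mass u / √3 → φ + t ∈ Ioo (-(π / 2)) (π / 2) := fun t ht ↦
    abs_lt.1 ((abs_add_le φ t).trans_lt (by linarith))
  have hmass : 0 ≤ mass u / √3 := (abs_nonneg _).trans (abs_phase_le hu 0)
  have hcos := (cos_pos_of_mem_Ioo (hmem _ (abs_of_nonneg hmass).le)).ne'
  exact hd.pow_four_mul_le_integral_quinticDensity hu hu'
    (k := fun y ↦ tan (φ + phase u y) / (4 * √3))
    (fun y ↦ hasDerivAt_tan_div_four_mul_sqrt_three
      ((hasDerivAt_phase hu hd.continuous y).const_add φ) (hmem _ (abs_phase_le hu y)))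
    (((continuousAt_tan.2 hcos).tendsto.comp ((tendsto_phase_atTop hu).const_add φ)).div_const _) a

lemma two_mul_tan_le_tan_add_add_tan_sub {φ δ : ℝ} (hφ : 0 ≤ φ) (hδ : φ + |δ| < π / 2) :
    2 * tan φ ≤ tan (φ + δ) + tan (φ - δ) := by
  have hδ' := abs_lt.1 (lt_sub_iff_add_lt'.2 hδ)
  have hcos : 0 < cos φ := cos_pos_of_mem_Ioo ⟨by linarith, by linarith [abs_nonneg δ]⟩
  have hadd : 0 < cos (φ + δ) := cos_pos_of_mem_Ioo ⟨by linarith, by linarith⟩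
  have hsub : 0 < cos (φ - δ) := cos_pos_of_mem_Ioo ⟨by linarith, by linarith⟩
  have hsin : 0 ≤ sin φ := sin_nonneg_of_nonneg_of_le_pi hφ (by linarith [abs_nonneg δ, pi_pos])
  have hprod : cos (φ + δ) * cos (φ - δ) ≤ cos φ ^ 2 := by
    rw [cos_add, cos_sub]
    nlinarith [sin_sq_add_cos_sq φ, sin_sq_add_cos_sq δ, sq_nonneg (sin δ)]
  calc 2 * tan φ = 2 * sin φ * cos φ / cos φ ^ 2 := by
        rw [tan_eq_sin_div_cos]; field_simp
    _ ≤ 2 * sin φ * cos φ / (cos (φ + δ) * cos (φ - δ)) := by gcongr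
    _ = tan (φ + δ) + tan (φ - δ) := by
        rw [← sin_two_mul, show 2 * φ = (φ + δ) + (φ - δ) by ring, sin_add (φ + δ),
          tan_eq_sin_div_cos, tan_eq_sin_div_cos]
        field_simp

lemma HasWeakDeriv.pow_four_mul_tan_le_integral_quinticDensity (hd : HasWeakDeriv u u')
    (hu : Integrable fun x ↦ u x ^ 2) (hu' : Integrable fun x ↦ u' x ^ 2) {φ : ℝ} (hφ : 0 ≤ φ)
    (hφm : φ + mass u / √3 < π / 2) :
    u 0 ^ 4 * (tan φ / (2 * √3)) ≤ ∫ x, quinticDensity u u' x := by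
  have hmass : mass (fun x ↦ u (-x)) = mass u := integral_neg_eq_self (fun x ↦ u x ^ 2) volume
  have hright := hd.pow_four_mul_tan_le hu hu' (φ := φ) (by rwa [abs_of_nonneg hφ]) 0
  have hleft := hd.comp_neg.pow_four_mul_tan_le hu.comp_neg (by simpa using hu'.comp_neg)
    (φ := φ) (by rwa [hmass, abs_of_nonneg hφ]) 0
  have hreflect : ∫ x in Ioi 0, quinticDensity (fun x ↦ u (-x)) (fun x ↦ -u' (-x)) x =
      ∫ x in Iic 0, quinticDensity u u' x := by
    simpa [quinticDensity] using integral_comp_neg_Ioi 0 (quinticDensity u u')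
  rw [hreflect, phase_comp_neg_zero, neg_zero, ← sub_eq_add_neg] at hleft
  have htan := two_mul_tan_le_tan_add_add_tan_sub hφ
    ((add_le_add_right (abs_phase_le hu 0) φ).trans_lt hφm)
  have hint := hd.integrable_quinticDensity hu hu'
  calc u 0 ^ 4 * (tan φ / (2 * √3)) = u 0 ^ 4 * (2 * tan φ / (4 * √3)) := by ring
    _ ≤ u 0 ^ 4 * ((tan (φ + phase u 0) + tan (φ - phase u 0)) / (4 * √3)) := by gcongr
    _ = u 0 ^ 4 * (tan (φ - phase u 0) / (4 * √3)) +
        u 0 ^ 4 * (tan (φ + phase u 0) / (4 * √3)) := by ring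
    _ ≤ (∫ x in Iic 0, quinticDensity u u' x) + ∫ x in Ioi 0, quinticDensity u u' x :=
        add_le_add hleft hright
    _ = ∫ x, quinticDensity u u' x :=
        intervalIntegral.integral_Iic_add_Ioi hint.integrableOn hint.integrableOn

/-- The mass `√3 (π/2 - arctan (√3/2))` at which a ground state exists: there the slope `tan φ` of
the calibration, at its largest admissible phase `φ = arctan (√3/2)`, exactly compensates the point
interaction. -/
def criticalMass : ℝ := √3 * (π / 2 - arctan (√3 / 2))

lemma criticalMass_eq : criticalMass = √3 * (π / 2 - arcsin √(3 / 7)) := by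
  rw [criticalMass, arctan_eq_arcsin]
  congr 3
  rw [div_pow, Real.sq_sqrt (by norm_num), show (1 + 3 / 2 ^ 2 : ℝ) = 7 / 2 ^ 2 by norm_num,
    Real.sqrt_div (by norm_num), Real.sqrt_sq (by norm_num), Real.sqrt_div (by norm_num)]
  field_simp

lemma criticalMass_pos : 0 < criticalMass :=
  mul_pos (by positivity) (sub_pos.2 (arctan_lt_pi_div_two _))

lemma IsH1.Ffun_nonneg_of_mass_eq (hu : IsH1 u u') (hm : mass u = criticalMass) :
    0 ≤ Ffun 6 4 u u' := by
  have hm0 : mass u ≠ 0 := hm ▸ criticalMass_pos.ne'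
  have hd := hu.hasWeakDeriv hm0
  set φ₀ := arctan (√3 / 2) with hφ₀
  have hφ₀_pos : 0 < φ₀ := arctan_pos.2 (by positivity)
  have hbound : ∀ᶠ φ in 𝓝[<] φ₀, u 0 ^ 4 * (tan φ / (2 * √3)) ≤ ∫ x, quinticDensity u u' x := by
    filter_upwards [Ioo_mem_nhdsLT hφ₀_pos] with φ hφ
    refine hd.pow_four_mul_tan_le_integral_quinticDensity hu.2.1 hu.2.2.1 hφ.1.le ?_
    rw [hm, criticalMass, mul_div_cancel_left₀ _ (by positivity)]
    linarith [hφ.2]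
  have hlim : Tendsto (fun φ ↦ u 0 ^ 4 * (tan φ / (2 * √3))) (𝓝[<] φ₀) (𝓝 (u 0 ^ 4 * (1 / 4))) := by
    have htan : tan φ₀ / (2 * √3) = 1 / 4 := by
      rw [hφ₀, tan_arctan]
      field_simp
      norm_num
    rw [← htan]
    exact (((continuousAt_tan.2 (cos_arctan_pos _).ne').tendsto.mono_left
      nhdsWithin_le_nhds).div_const _).const_mul _
  rw [hu.Ffun_six_four_eq hm0, sub_nonneg, mul_comm]
  exact le_of_tendsto hlim hbound

end Calibration


section Scaling

variable {u u' v v' : ℝ → ℝ} {μ ν : ℝ}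

lemma IsH1.const_mul_comp_mul (hu : IsH1 u u') (a : ℝ) {b : ℝ} (hb : 0 < b) :
    IsH1 (fun x ↦ a * u (b * x)) (fun x ↦ a * b * u' (b * x)) := by
  obtain ⟨hcont, hu2, hu2', hftc⟩ := hu
  refine ⟨by fun_prop, ?_, ?_, fun x y hxy ↦ ?_⟩
  · simpa only [mul_pow] using (hu2.comp_mul_left' hb.ne').const_mul (a ^ 2)
  · simpa only [mul_pow] using (hu2'.comp_mul_left' hb.ne').const_mul (a ^ 2 * b ^ 2)
  · rw [intervalIntegral.integral_const_mul, intervalIntegral.integral_comp_mul_left _ hb.ne',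
      ← hftc _ _ (by gcongr), smul_eq_mul]
    field_simp

lemma mass_const_mul_comp_mul (u : ℝ → ℝ) (a : ℝ) {b : ℝ} (hb : 0 < b) :
    mass (fun x ↦ a * u (b * x)) = a ^ 2 / b * mass u := by
  simp only [mass, mul_pow]
  rw [integral_const_mul, Measure.integral_comp_mul_left (fun x ↦ u x ^ 2),
    abs_of_pos (by positivity), smul_eq_mul]
  ring

lemma Ffun_const_mul_comp_mul (p q : ℝ) (u u' : ℝ → ℝ) {a b : ℝ} (ha : 0 ≤ a) (hb : 0 < b) :
    Ffun p q (fun x ↦ a * u (b * x)) (fun x ↦ a * b * u' (b * x)) =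
      a ^ 2 * b * (1 / 2 * ∫ x, u' x ^ 2) - a ^ p / b * (1 / p * ∫ x, |u x| ^ p) -
        a ^ q * (1 / q * |u 0| ^ q) := by
  have hrpow : ∀ r y : ℝ, |a * y| ^ r = a ^ r * |y| ^ r := fun r y ↦ by
    rw [abs_mul, abs_of_nonneg ha, Real.mul_rpow ha (abs_nonneg y)]
  simp only [Ffun, hrpow, mul_pow, mul_zero]
  rw [integral_const_mul, integral_const_mul, Measure.integral_comp_mul_left (fun x ↦ u' x ^ 2),
    Measure.integral_comp_mul_left (fun x ↦ |u x| ^ p), abs_of_pos (by positivity),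
    smul_eq_mul, smul_eq_mul]
  field_simp

lemma Ffun_six_four_dilation (u u' : ℝ → ℝ) {l : ℝ} (hl : 0 < l) :
    Ffun 6 4 (fun x ↦ √l * u (l * x)) (fun x ↦ √l * l * u' (l * x)) = l ^ 2 * Ffun 6 4 u u' := by
  have hsq : √l ^ 2 = l := Real.sq_sqrt hl.le
  have h4 : √l ^ 4 = l ^ 2 := by rw [pow_mul _ 2 2, hsq]
  have h6 : √l ^ 6 = l ^ 3 := by rw [pow_mul _ 2 3, hsq]
  rw [Ffun_const_mul_comp_mul 6 4 u u' (Real.sqrt_nonneg l) hl, Real.rpow_ofNat, Real.rpow_ofNat,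
    hsq, h4, h6, Ffun]
  field_simp

lemma IsH1.integral_abs_rpow_pos (hu : IsH1 u u') (hm : mass u ≠ 0) {p : ℝ} (hp : 2 ≤ p) :
    0 < ∫ x, |u x| ^ p := by
  obtain ⟨x₀, hx₀⟩ : ∃ x, u x ≠ 0 := by
    by_contra! hzero
    exact hm (by simp [mass, hzero])
  exact integral_pos_of_integrable_nonneg_nonzero
    (hu.1.abs.rpow_const fun _ ↦ .inr (zero_le_two.trans hp))
    ((hu.hasWeakDeriv hm).integrable_abs_rpow hu.2.1 hu.2.2.1 hp)
    (fun _ ↦ by positivity) (x := x₀) (by positivity)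

lemma IsH1.Ffun_const_mul_lt (hu : IsH1 u u') (hm : mass u ≠ 0) {p q a : ℝ} (hp : 2 < p)
    (hq : 2 ≤ q) (ha : 1 < a) :
    Ffun p q (fun x ↦ a * u x) (fun x ↦ a * u' x) < a ^ 2 * Ffun p q u u' := by
  have hscale := Ffun_const_mul_comp_mul p q u u' (zero_le_one.trans ha.le) one_pos
  simp only [one_mul, mul_one, div_one] at hscale
  have hbulk : a ^ 2 * (1 / p * ∫ x, |u x| ^ p) < a ^ p * (1 / p * ∫ x, |u x| ^ p) := by
    rw [← Real.rpow_two]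
    have := hu.integral_abs_rpow_pos hm hp.le
    gcongr ?_ * _
    exact Real.rpow_lt_rpow_of_exponent_lt ha hp
  have hpoint : a ^ 2 * (1 / q * |u 0| ^ q) ≤ a ^ q * (1 / q * |u 0| ^ q) := by
    rw [← Real.rpow_two]
    gcongr
    exact ha.le
  rw [hscale, Ffun]
  linarith

/-- `u`, with weak derivative `u'`, is a ground state of `F_{p,q}` at mass `μ`. -/
def IsGroundState (p q μ : ℝ) (u u' : ℝ → ℝ) : Prop :=
  IsH1 u u' ∧ mass u = μ ∧
    ∀ v v' : ℝ → ℝ, IsH1 v v' → mass v = μ → Ffun p q u u' ≤ Ffun p q v v'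

lemma IsGroundState.Ffun_eq_zero (hu : IsGroundState 6 4 μ u u') : Ffun 6 4 u u' = 0 := by
  obtain ⟨huH, hum, hmin⟩ := hu
  have hdilate : ∀ l : ℝ, 0 < l → Ffun 6 4 u u' ≤ l ^ 2 * Ffun 6 4 u u' := fun l hl ↦ by
    rw [← Ffun_six_four_dilation u u' hl]
    refine hmin _ _ (huH.const_mul_comp_mul _ hl) ?_
    rw [mass_const_mul_comp_mul u _ hl, Real.sq_sqrt hl.le, div_self hl.ne', one_mul, hum]
  linarith [hdilate 2 (by norm_num), hdilate (1 / 2) (by norm_num)]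

lemma IsGroundState.mass_le (hu : IsGroundState 6 4 μ u u') (hv : IsGroundState 6 4 ν v v')
    (hμ : 0 < μ) : ν ≤ μ := by
  by_contra! hlt
  have hu0 := hu.Ffun_eq_zero
  obtain ⟨huH, rfl, -⟩ := hu
  set a := √(ν / mass u)
  have ha : 1 < a := Real.lt_sqrt_of_sq_lt (by rwa [one_pow, one_lt_div hμ])
  have hmass : mass (fun x ↦ a * u x) = ν := by
    have := mass_const_mul_comp_mul u a one_pos
    rw [Real.sq_sqrt (div_pos (hμ.trans hlt) hμ).le, div_one, div_mul_cancel₀ _ hμ.ne'] at this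
    simpa only [one_mul] using this
  have hauH : IsH1 (fun x ↦ a * u x) (fun x ↦ a * u' x) := by
    simpa only [one_mul, mul_one] using huH.const_mul_comp_mul a one_pos
  have hneg : Ffun 6 4 (fun x ↦ a * u x) (fun x ↦ a * u' x) < 0 := by
    simpa only [hu0, mul_zero] using
      huH.Ffun_const_mul_lt hμ.ne' (p := 6) (q := 4) (by norm_num) (by norm_num) ha
  exact absurd (hv.2.2 _ _ hauH hmass) (by rw [hv.Ffun_eq_zero]; exact hneg.not_ge)

lemma IsGroundState.mass_unique (hu : IsGroundState 6 4 μ u u') (hv : IsGroundState 6 4 ν v v')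
    (hμ : 0 < μ) (hν : 0 < ν) : μ = ν :=
  le_antisymm (hv.mass_le hu hν) (hu.mass_le hv hμ)

end Scaling

section Soliton

lemma integrable_comp_abs {E : Type*} [NormedAddCommGroup E] {f : ℝ → E}
    (hf : IntegrableOn f (Ioi 0)) : Integrable fun x ↦ f |x| := by
  have hright : IntegrableOn (fun x ↦ f |x|) (Ioi 0) :=
    hf.congr_fun (fun x hx ↦ by rw [abs_of_pos hx]) measurableSet_Ioi
  have hleft : IntegrableOn (fun x ↦ f |x|) (Iio 0) := by
    have hneg := (Measure.measurePreserving_neg (volume : Measure ℝ)).integrableOn_comp_preimage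
      (Homeomorph.neg ℝ).measurableEmbedding (f := fun x ↦ f |x|) (s := Ioi 0)
    simpa [Function.comp_def] using hneg.2 hright
  rw [← integrableOn_univ, ← Iic_union_Ioi (a := (0 : ℝ))]
  exact ((integrableOn_Iic_iff_integrableOn_Iio ..).2 hleft).union hright

/-- The odd extension of `g` from `[0, ∞)`, taking the value `g 0` at the origin; it serves as the
weak derivative of the even extension of a primitive of `g`. -/
def oddExtension (g : ℝ → ℝ) (x : ℝ) : ℝ := if x < 0 then -g |x| else g |x|

lemma oddExtension_sq (g : ℝ → ℝ) (x : ℝ) : oddExtension g x ^ 2 = g |x| ^ 2 := by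
  rw [oddExtension]
  split_ifs
  exacts [neg_sq _, rfl]

lemma measurable_oddExtension {g : ℝ → ℝ} (hg : Measurable g) : Measurable (oddExtension g) :=
  .ite measurableSet_Iio (hg.comp measurable_abs).neg (hg.comp measurable_abs)

lemma intervalIntegrable_oddExtension {g : ℝ → ℝ} (hg : Continuous g) (a b : ℝ) :
    IntervalIntegrable (oddExtension g) volume a b := by
  refine ((hg.comp continuous_abs).intervalIntegrable a b).mono_fun
    (measurable_oddExtension hg.measurable).aestronglyMeasurable (ae_of_all _ fun x ↦ ?_)
  exact (sq_eq_sq_iff_abs_eq_abs _ _).1 (oddExtension_sq g x) |>.le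

lemma hasDerivAt_comp_abs {f f' : ℝ → ℝ} (hf : ∀ x, HasDerivAt f (f' x) x) {x : ℝ} (hx : x ≠ 0) :
    HasDerivAt (fun x ↦ f |x|) (oddExtension f' x) x := by
  rcases lt_or_gt_of_ne hx with h | h
  · refine ((hf |x|).comp x (hasDerivAt_abs_neg h)).congr_deriv ?_
    simp only [oddExtension, h, if_true, mul_neg_one]
  · refine ((hf |x|).comp x (hasDerivAt_abs_pos h)).congr_deriv ?_
    simp only [oddExtension, h.not_gt, if_false, mul_one]

lemma isH1_comp_abs {f f' : ℝ → ℝ} (hf : ∀ x, HasDerivAt f (f' x) x) (hcont : Continuous f')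
    (hf2 : IntegrableOn (fun x ↦ f x ^ 2) (Ioi 0))
    (hf2' : IntegrableOn (fun x ↦ f' x ^ 2) (Ioi 0)) :
    IsH1 (fun x ↦ f |x|) (oddExtension f') := by
  have hfcont : Continuous f := continuous_iff_continuousAt.2 fun x ↦ (hf x).continuousAt
  refine ⟨by fun_prop, integrable_comp_abs hf2, ?_, fun a b _ ↦ ?_⟩
  · simpa only [oddExtension_sq] using integrable_comp_abs hf2'
  · exact (integral_eq_of_hasDerivAt_off_countable _ _ (countable_singleton (0 : ℝ))
      (by fun_prop) (fun x hx ↦ hasDerivAt_comp_abs hf hx.2)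
      (intervalIntegrable_oddExtension hcont a b)).symm

/-- The soliton `Q(x) = (√3 / cosh 2x)^(1/2)`, a solution of `Q'' + Q⁵ = Q`, translated to the left
by `c / 2`. -/
def solitonProfile (c x : ℝ) : ℝ := √(√3 / cosh (2 * x + c))

/-- The derivative of `solitonProfile c`. -/
def solitonProfileDeriv (c x : ℝ) : ℝ :=
  -(solitonProfile c x * (sinh (2 * x + c) / cosh (2 * x + c)))

lemma solitonProfile_pos (c x : ℝ) : 0 < solitonProfile c x :=
  Real.sqrt_pos.2 (div_pos (by positivity) (cosh_pos _))

lemma solitonProfile_sq (c x : ℝ) : solitonProfile c x ^ 2 = √3 / cosh (2 * x + c) :=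
  Real.sq_sqrt (div_nonneg (Real.sqrt_nonneg 3) (cosh_pos _).le)

lemma solitonProfile_pow_four (c x : ℝ) : solitonProfile c x ^ 4 = 3 / cosh (2 * x + c) ^ 2 := by
  rw [pow_mul _ 2 2, solitonProfile_sq, div_pow, Real.sq_sqrt (by norm_num)]

lemma hasDerivAt_two_mul_add (c x : ℝ) : HasDerivAt (fun x ↦ 2 * x + c) 2 x := by
  simpa using ((hasDerivAt_id x).const_mul 2).add_const c

lemma hasDerivAt_solitonProfile (c x : ℝ) :
    HasDerivAt (solitonProfile c) (solitonProfileDeriv c x) x := by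
  have hcosh := cosh_pos (2 * x + c)
  have hQ := solitonProfile_pos c x
  have hinv : HasDerivAt (fun x ↦ √3 / cosh (2 * x + c))
      (√3 * (-(sinh (2 * x + c) * 2) / cosh (2 * x + c) ^ 2)) x :=
    ((hasDerivAt_two_mul_add c x).cosh.inv hcosh.ne').const_mul √3
  refine (hinv.sqrt (by positivity)).congr_deriv ?_
  change _ / (2 * solitonProfile c x) = _
  rw [solitonProfileDeriv, div_eq_iff (by positivity)]
  linear_combination (-2 * sinh (2 * x + c) / cosh (2 * x + c)) * -solitonProfile_sq c x

lemma continuous_solitonProfileDeriv (c : ℝ) : Continuous (solitonProfileDeriv c) := by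
  have hcont : Continuous (solitonProfile c) :=
    continuous_iff_continuousAt.2 fun x ↦ (hasDerivAt_solitonProfile c x).continuousAt
  exact (hcont.mul (.div (by fun_prop) (by fun_prop) fun x ↦ (cosh_pos _).ne')).neg

lemma solitonProfileDeriv_sq_le (c x : ℝ) :
    solitonProfileDeriv c x ^ 2 ≤ solitonProfile c x ^ 2 := by
  rw [solitonProfileDeriv, neg_sq, mul_pow, ← tanh_eq_sinh_div_cosh]
  exact mul_le_of_le_one_right (sq_nonneg _) (tanh_sq_lt_one _).le

lemma tendsto_sinh_two_mul_add_atTop (c : ℝ) :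
    Tendsto (fun x ↦ sinh (2 * x + c)) atTop atTop :=
  sinhOrderIso.tendsto_atTop.comp
    (tendsto_atTop_add_const_right _ _ (tendsto_id.const_mul_atTop two_pos))

lemma hasDerivAt_arctan_sinh (c x : ℝ) :
    HasDerivAt (fun x ↦ √3 / 2 * arctan (sinh (2 * x + c))) (solitonProfile c x ^ 2) x := by
  refine ((hasDerivAt_two_mul_add c x).sinh.arctan.const_mul (√3 / 2)).congr_deriv ?_
  rw [solitonProfile_sq, ← cosh_sq']
  field_simp

lemma tendsto_arctan_sinh_atTop (c : ℝ) :
    Tendsto (fun x ↦ √3 / 2 * arctan (sinh (2 * x + c))) atTop (𝓝 (√3 / 2 * (π / 2))) :=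
  ((tendsto_nhds_of_tendsto_nhdsWithin tendsto_arctan_atTop).comp
    (tendsto_sinh_two_mul_add_atTop c)).const_mul _

lemma integrableOn_solitonProfile_sq (c : ℝ) :
    IntegrableOn (fun x ↦ solitonProfile c x ^ 2) (Ioi 0) :=
  integrableOn_Ioi_deriv_of_nonneg' (fun x _ ↦ hasDerivAt_arctan_sinh c x)
    (fun _ _ ↦ sq_nonneg _) (tendsto_arctan_sinh_atTop c)

lemma mass_soliton (c : ℝ) :
    mass (fun x ↦ solitonProfile c |x|) = √3 * (π / 2 - arctan (sinh c)) := by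
  have hhalf := integral_Ioi_of_hasDerivAt_of_tendsto' (fun x _ ↦ hasDerivAt_arctan_sinh c x)
    (integrableOn_solitonProfile_sq c) (tendsto_arctan_sinh_atTop c)
  rw [mul_zero, zero_add] at hhalf
  rw [mass, integral_comp_abs (f := fun x ↦ solitonProfile c x ^ 2), hhalf]
  ring

lemma isH1_soliton (c : ℝ) :
    IsH1 (fun x ↦ solitonProfile c |x|) (oddExtension (solitonProfileDeriv c)) := by
  refine isH1_comp_abs (hasDerivAt_solitonProfile c) (continuous_solitonProfileDeriv c)
    (integrableOn_solitonProfile_sq c) ((integrableOn_solitonProfile_sq c).mono'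
      ((continuous_solitonProfileDeriv c).pow 2).aestronglyMeasurable (ae_of_all _ fun x ↦ ?_))
  rw [Real.norm_of_nonneg (sq_nonneg _)]
  exact solitonProfileDeriv_sq_le c x

lemma quinticDensity_comp_abs (f g : ℝ → ℝ) (x : ℝ) :
    quinticDensity (fun x ↦ f |x|) (oddExtension g) x = quinticDensity f g |x| := by
  rw [quinticDensity, oddExtension_sq, quinticDensity]

lemma hasDerivAt_sinh_div_cosh_sq (c x : ℝ) :
    HasDerivAt (fun x ↦ -(√3 / 4) * (sinh (2 * x + c) / cosh (2 * x + c) ^ 2))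
      (quinticDensity (solitonProfile c) (solitonProfileDeriv c) x) x := by
  have harg := hasDerivAt_two_mul_add c x
  refine ((harg.sinh.div (harg.cosh.fun_pow 2) (by positivity)).const_mul _).congr_deriv ?_
  have hsinh : sinh (2 * x + c) ^ 2 = cosh (2 * x + c) ^ 2 - 1 := sinh_sq _
  have hsix : solitonProfile c x ^ 6 = 3 * √3 / cosh (2 * x + c) ^ 3 := by
    rw [pow_add _ 4 2, solitonProfile_pow_four, solitonProfile_sq]
    field_simp
  rw [quinticDensity, solitonProfileDeriv, neg_sq, mul_pow, solitonProfile_sq, hsix, div_pow, hsinh]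
  push_cast
  field_simp
  linear_combination 48 * hsinh

lemma tendsto_sinh_div_cosh_sq_atTop (c : ℝ) :
    Tendsto (fun x ↦ -(√3 / 4) * (sinh (2 * x + c) / cosh (2 * x + c) ^ 2)) atTop (𝓝 0) := by
  have hsinh := tendsto_sinh_two_mul_add_atTop c
  have hquot : Tendsto (fun x ↦ sinh (2 * x + c) / cosh (2 * x + c) ^ 2) atTop (𝓝 0) := by
    refine squeeze_zero' ?_ ?_ hsinh.inv_tendsto_atTop
    · filter_upwards [hsinh.eventually_ge_atTop 0] with x hx
      positivity
    · filter_upwards [hsinh.eventually_gt_atTop 0] with x hx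
      rw [Pi.inv_apply, cosh_sq, div_le_iff₀ (by positivity)]
      field_simp
      linarith
  simpa only [mul_zero] using hquot.const_mul (-(√3 / 4))

lemma Ffun_soliton (c : ℝ) :
    Ffun 6 4 (fun x ↦ solitonProfile c |x|) (oddExtension (solitonProfileDeriv c)) =
      (√3 / 2 * sinh c - 3 / 4) / cosh c ^ 2 := by
  have hH := isH1_soliton c
  have hm : mass (fun x ↦ solitonProfile c |x|) ≠ 0 := by
    rw [mass_soliton]
    exact (mul_pos (by positivity) (sub_pos.2 (arctan_lt_pi_div_two _))).ne'
  have hint := (hH.hasWeakDeriv hm).integrable_quinticDensity hH.2.1 hH.2.2.1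
  have hhalf := integral_Ioi_of_hasDerivAt_of_tendsto' (fun x _ ↦ hasDerivAt_sinh_div_cosh_sq c x)
    (hint.integrableOn.congr_fun (fun x hx ↦ by rw [quinticDensity_comp_abs, abs_of_pos hx])
      measurableSet_Ioi) (tendsto_sinh_div_cosh_sq_atTop c)
  rw [mul_zero, zero_add] at hhalf
  rw [hH.Ffun_six_four_eq hm, abs_zero, solitonProfile_pow_four, mul_zero, zero_add]
  simp only [quinticDensity_comp_abs]
  rw [integral_comp_abs, hhalf]
  ring

lemma isGroundState_soliton :
    IsGroundState 6 4 criticalMass (fun x ↦ solitonProfile (arsinh (√3 / 2)) |x|)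
      (oddExtension (solitonProfileDeriv (arsinh (√3 / 2)))) := by
  refine ⟨isH1_soliton _, by rw [mass_soliton, sinh_arsinh, criticalMass], fun v v' hv hvm ↦ ?_⟩
  have hzero : √3 / 2 * (√3 / 2) - 3 / 4 = 0 := by
    rw [div_mul_div_comm, Real.mul_self_sqrt (by norm_num)]
    norm_num
  rw [Ffun_soliton, sinh_arsinh, hzero, zero_div]
  exact hv.Ffun_nonneg_of_mass_eq hvm

end Soliton

theorem stmt14 (μ : ℝ) (hμ : 0 < μ) :
    (∃ u u' : ℝ → ℝ, IsH1 u u' ∧ mass u = μ ∧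
      ∀ v v' : ℝ → ℝ, IsH1 v v' → mass v = μ → Ffun 6 4 u u' ≤ Ffun 6 4 v v') ↔
    μ = Real.sqrt 3 * (Real.pi / 2 - Real.arcsin (Real.sqrt (3 / 7))) := by
  rw [← criticalMass_eq]
  constructor
  · rintro ⟨u, u', hu⟩
    exact IsGroundState.mass_unique hu isGroundState_soliton hμ criticalMass_pos
  · rintro rfl
    exact ⟨_, _, isGroundState_soliton⟩
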